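/- Let C be a regular Ord-category. For ideals R: X ↬ Y, S: Y ↬ Z and T: X ↬ Z, the enriched modular laws hold: (S∘R) ∧ T ⊆ S∘(R ∧ (S^*∘T)) and (S∘R) ∧ T ⊆ (S ∧ (T∘R^*))∘R. -/

import Mathlib

open CategoryTheory

universe w v u

/-- An `Ord`-enrichment of a category: a preorder on each hom-set,
preserved by composition on both sides. -/
class OrdEnrichment (C : Type u) [Category.{v} C] : Type (max u v) where
  ord : ∀ {X Y : C}, (X ⟶ Y) → (X ⟶ Y) → Prop
  ord_refl : ∀ {X Y : C} (f : X ⟶ Y), ord f f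
  ord_trans : ∀ {X Y : C} {f g h : X ⟶ Y}, ord f g → ord g h → ord f h
  precomp_ord : ∀ {X Y Z : C} (e : X ⟶ Y) {f g : Y ⟶ Z}, ord f g → ord (e ≫ f) (e ≫ g)
  postcomp_ord : ∀ {X Y Z : C} {f g : X ⟶ Y} (h : Y ⟶ Z), ord f g → ord (f ≫ h) (g ≫ h)

/-- The preorder on hom-sets of an `Ord`-category. -/
def homLe {C : Type u} [Category.{v} C] [OrdEnrichment C] {X Y : C} (f g : X ⟶ Y) : Prop :=
  OrdEnrichment.ord f g

infixl:50 " ≼ " => homLe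

section

variable {C : Type u} [Category.{v} C] [OrdEnrichment C]

/-- A full (ff-) morphism. -/
def IsFF {X Y : C} (m : X ⟶ Y) : Prop :=
  ∀ {A : C} (a a' : A ⟶ X), (a ≫ m) ≼ (a' ≫ m) → a ≼ a'

/-- An ff-monomorphism: a full monomorphism. -/
def IsFFMono {X Y : C} (m : X ⟶ Y) : Prop := IsFF m ∧ Mono m

/-- An so-morphism: a morphism left orthogonal to every ff-monomorphism. -/
def IsSO {A B : C} (e : A ⟶ B) : Prop :=
  ∀ {X Y : C} (m : X ⟶ Y), IsFFMono m → ∀ (u : A ⟶ X) (v : B ⟶ Y),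
    u ≫ m = e ≫ v → ∃ d : B ⟶ X, e ≫ d = u ∧ d ≫ m = v

/-- The (strict) comma object square for the ordered pair `(f, g)`. -/
structure IsCommaSq {X Y Z : C} (f : X ⟶ Y) (g : Z ⟶ Y) (P : C)
    (π₁ : P ⟶ X) (π₂ : P ⟶ Z) : Prop where
  le : (π₁ ≫ f) ≼ (π₂ ≫ g)
  lift : ∀ {A : C} (α : A ⟶ X) (β : A ⟶ Z), (α ≫ f) ≼ (β ≫ g) →
    ∃! h : A ⟶ P, h ≫ π₁ = α ∧ h ≫ π₂ = β
  lift_ord : ∀ {A : C} {h h' : A ⟶ P}, (h ≫ π₁) ≼ (h' ≫ π₁) → (h ≫ π₂) ≼ (h' ≫ π₂) → h ≼ h'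

/-- A 2-pullback square (pullback with the `Ord`-enriched universal property). -/
structure Is2Pullback {X Y Z : C} (f : X ⟶ Z) (g : Y ⟶ Z) (P : C)
    (p : P ⟶ X) (q : P ⟶ Y) : Prop where
  comm : p ≫ f = q ≫ g
  lift : ∀ {A : C} (a : A ⟶ X) (b : A ⟶ Y), a ≫ f = b ≫ g →
    ∃! h : A ⟶ P, h ≫ p = a ∧ h ≫ q = b
  lift_ord : ∀ {A : C} {h h' : A ⟶ P}, (h ≫ p) ≼ (h' ≫ p) → (h ≫ q) ≼ (h' ≫ q) → h ≼ h'

/-- A binary 2-product. -/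
structure Is2Product (X Y : C) (P : C) (p : P ⟶ X) (q : P ⟶ Y) : Prop where
  lift : ∀ {A : C} (a : A ⟶ X) (b : A ⟶ Y), ∃! h : A ⟶ P, h ≫ p = a ∧ h ≫ q = b
  lift_ord : ∀ {A : C} {h h' : A ⟶ P}, (h ≫ p) ≼ (h' ≫ p) → (h ≫ q) ≼ (h' ≫ q) → h ≼ h'

/-- A 2-equalizer. -/
structure Is2Equalizer {X Y : C} (f g : X ⟶ Y) (E : C) (i : E ⟶ X) : Prop where
  comm : i ≫ f = i ≫ g
  lift : ∀ {A : C} (a : A ⟶ X), a ≫ f = a ≫ g → ∃! h : A ⟶ E, h ≫ i = a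
  lift_ord : ∀ {A : C} {h h' : A ⟶ E}, (h ≫ i) ≼ (h' ≫ i) → h ≼ h'

/-- A bicoinserter of a parallel pair. -/
structure IsBicoinserter {X A E : C} (a b : X ⟶ A) (e : A ⟶ E) : Prop where
  le : (a ≫ e) ≼ (b ≫ e)
  desc : ∀ {F : C} (f : A ⟶ F), (a ≫ f) ≼ (b ≫ f) →
    ∃ t : E ⟶ F, (e ≫ t) ≼ f ∧ f ≼ (e ≫ t)
  desc_ord : ∀ {F : C} {f f' : A ⟶ F} {t t' : E ⟶ F},
    (e ≫ t) ≼ f → f ≼ (e ≫ t) → (e ≫ t') ≼ f' → f' ≼ (e ≫ t') → f ≼ f' → t ≼ t'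

/-- A relation from `X` to `Y` in an `Ord`-category: a jointly ff-monomorphic span. -/
structure RelStr (X Y : C) : Type (max u v) where
  obj : C
  p : obj ⟶ X
  q : obj ⟶ Y
  jointly_ff : ∀ {A : C} (a a' : A ⟶ obj), (a ≫ p) ≼ (a' ≫ p) → (a ≫ q) ≼ (a' ≫ q) → a ≼ a'
  jointly_mono : ∀ {A : C} (a a' : A ⟶ obj), a ≫ p = a' ≫ p → a ≫ q = a' ≫ q → a = a'

/-- `(x, y) ∈_A R`. -/
def RelStr.Mem {X Y : C} (R : RelStr X Y) {A : C} (x : A ⟶ X) (y : A ⟶ Y) : Prop :=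
  ∃ h : A ⟶ R.obj, h ≫ R.p = x ∧ h ≫ R.q = y

/-- `R ⊆ S`: `R` factors through `S` (over `X × Y`). -/
def RelStr.Sub {X Y : C} (R S : RelStr X Y) : Prop :=
  ∃ φ : R.obj ⟶ S.obj, φ ≫ S.p = R.p ∧ φ ≫ S.q = R.q

/-- `R ≅ S`: mutual factorisation. -/
def RelStr.Iso {X Y : C} (R S : RelStr X Y) : Prop := R.Sub S ∧ S.Sub R

/-- The opposite relation `R°`. -/
def RelStr.op {X Y : C} (R : RelStr X Y) : RelStr Y X where
  obj := R.obj
  p := R.q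
  q := R.p
  jointly_ff := fun a a' h1 h2 => R.jointly_ff a a' h2 h1
  jointly_mono := fun a a' h1 h2 => R.jointly_mono a a' h2 h1

/-- A relation is an (order) ideal when it is closed under lowering the first
coordinate and raising the second coordinate. -/
def IsIdealRel {X Y : C} (R : RelStr X Y) : Prop :=
  ∀ {A : C} (x x' : A ⟶ X) (y y' : A ⟶ Y), x' ≼ x → R.Mem x y → y ≼ y' → R.Mem x' y'

/-- The relation `f_♯` given by the span `(1_X, f)`. -/
def sharpRel {X Y : C} (f : X ⟶ Y) : RelStr X Y where
  obj := X
  p := 𝟙 X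
  q := f
  jointly_ff := fun a a' h1 _ => by simpa using h1
  jointly_mono := fun a a' h1 _ => by simpa using h1

/-- The relation `f°`, the opposite of `f_♯`. -/
def cosharpRel {X Y : C} (f : X ⟶ Y) : RelStr Y X := (sharpRel f).op

/-- `M` is the meet (intersection) `R ∧ S` of two relations. -/
def IsMeetRel {X Y : C} (R S M : RelStr X Y) : Prop :=
  M.Sub R ∧ M.Sub S ∧
    ∀ {A : C} (x : A ⟶ X) (y : A ⟶ Y), R.Mem x y → S.Mem x y → M.Mem x y

/-- `T` is the composite `S ∘ R` of the relations `R : X ↬ Y` and `S : Y ↬ Z`,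
obtained via the (so-morphism, ff-monomorphism) factorisation of the span
given by the 2-pullback over the middle object. -/
def IsCompositeRel {X Y Z : C} (R : RelStr X Y) (S : RelStr Y Z) (T : RelStr X Z) : Prop :=
  ∃ (P : C) (p₁ : P ⟶ R.obj) (p₂ : P ⟶ S.obj) (e : P ⟶ T.obj),
    Is2Pullback R.q S.p P p₁ p₂ ∧ IsSO e ∧ e ≫ T.p = p₁ ≫ R.p ∧ e ≫ T.q = p₂ ≫ S.q

/-- `R` is the ideal `f_* = f / 1_Y : X ↬ Y`. -/
def IsStarRel {X Y : C} (f : X ⟶ Y) (R : RelStr X Y) : Prop :=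
  IsCommaSq f (𝟙 Y) R.obj R.p R.q

/-- `R` is the ideal `f^* = 1_Y / f : Y ↬ X`. -/
def IsCostarRel {X Y : C} (f : X ⟶ Y) (R : RelStr Y X) : Prop :=
  IsCommaSq (𝟙 Y) f R.obj R.p R.q

/-- `R` is the identity ideal `I_X = 1_X / 1_X`. -/
def IsIdRel (X : C) (R : RelStr X X) : Prop :=
  IsCommaSq (𝟙 X) (𝟙 X) R.obj R.p R.q

/-- `S` is the 2-pullback of the relation `R ↣ X × Y` along `f × g`. -/
def IsRelPullback {X Y U V : C} (R : RelStr X Y) (f : U ⟶ X) (g : V ⟶ Y)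
    (S : RelStr U V) : Prop :=
  ∃ h : S.obj ⟶ R.obj, h ≫ R.p = S.p ≫ f ∧ h ≫ R.q = S.q ≫ g ∧
    ∀ {A : C} (a : A ⟶ U) (b : A ⟶ V) (c : A ⟶ R.obj),
      c ≫ R.p = a ≫ f → c ≫ R.q = b ≫ g →
      ∃ d : A ⟶ S.obj, d ≫ S.p = a ∧ d ≫ S.q = b ∧ d ≫ h = c

/-- A binary 2-coproduct. -/
structure Is2Coproduct (X Y : C) (P : C) (i : X ⟶ P) (j : Y ⟶ P) : Prop where
  desc : ∀ {A : C} (a : X ⟶ A) (b : Y ⟶ A), ∃! h : P ⟶ A, i ≫ h = a ∧ j ≫ h = b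
  desc_ord : ∀ {A : C} {h h' : P ⟶ A}, (i ≫ h) ≼ (i ≫ h') → (j ≫ h) ≼ (j ≫ h') → h ≼ h'

/-- A ternary 2-coproduct. -/
structure Is3Coproduct (X Y Z : C) (P : C) (i : X ⟶ P) (j : Y ⟶ P) (k : Z ⟶ P) : Prop where
  desc : ∀ {A : C} (a : X ⟶ A) (b : Y ⟶ A) (c : Z ⟶ A),
    ∃! h : P ⟶ A, i ≫ h = a ∧ j ≫ h = b ∧ k ≫ h = c
  desc_ord : ∀ {A : C} {h h' : P ⟶ A},
    (i ≫ h) ≼ (i ≫ h') → (j ≫ h) ≼ (j ≫ h') → (k ≫ h) ≼ (k ≫ h') → h ≼ h'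

/-- Reflexivity of a relation on `X`: the diagonal factors through it. -/
def ReflexiveRel {X : C} (R : RelStr X X) : Prop := R.Mem (𝟙 X) (𝟙 X)

/-- Transitivity of a relation on `X`: `R ∘ R ⊆ R`. -/
def TransitiveRel {X : C} (R : RelStr X X) : Prop :=
  ∀ T : RelStr X X, IsCompositeRel R R T → T.Sub R

/-- A congruence: a reflexive and transitive ideal. -/
def IsCongruence {X : C} (R : RelStr X X) : Prop :=
  IsIdealRel R ∧ ReflexiveRel R ∧ TransitiveRel R

/-- An effective congruence: `R ≅ f^* ∘ f_*` for some morphism `f`. -/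
def EffectiveCongruence {X : C} (R : RelStr X X) : Prop :=
  ∃ (Y : C) (f : X ⟶ Y) (Fstar : RelStr X Y) (Fco : RelStr Y X) (T : RelStr X X),
    IsStarRel f Fstar ∧ IsCostarRel f Fco ∧ IsCompositeRel Fstar Fco T ∧ R.Iso T

/-- The `Ord`-enriched difunctionality property of a relation. -/
def OrdDifunctional {X Y : C} (D : RelStr X Y) : Prop :=
  ∀ {A : C} (x u u' : A ⟶ X) (y y' v : A ⟶ Y),
    D.Mem x y → y ≼ y' → D.Mem u y' → u ≼ u' → D.Mem u' v → D.Mem x v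

end

/-- A regular `Ord`-category: finite weighted limits, an
(so-morphism, ff-monomorphism) factorisation system, so-morphisms stable under
2-pullbacks, and every so-morphism the bicoinserter of its comma object projections. -/
structure IsRegularOrd (C : Type u) [Category.{v} C] [OrdEnrichment C] : Prop where
  hasTerminal : ∃ T : C, ∀ A : C, ∃ f : A ⟶ T, ∀ g : A ⟶ T, g = f
  has2Products : ∀ X Y : C, ∃ (P : C) (p : P ⟶ X) (q : P ⟶ Y), Is2Product X Y P p q
  has2Equalizers : ∀ {X Y : C} (f g : X ⟶ Y), ∃ (E : C) (i : E ⟶ X), Is2Equalizer f g E i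
  has2Pullbacks : ∀ {X Y Z : C} (f : X ⟶ Z) (g : Y ⟶ Z),
    ∃ (P : C) (p : P ⟶ X) (q : P ⟶ Y), Is2Pullback f g P p q
  hasCommaObjects : ∀ {X Y Z : C} (f : X ⟶ Y) (g : Z ⟶ Y),
    ∃ (P : C) (p : P ⟶ X) (q : P ⟶ Z), IsCommaSq f g P p q
  fact : ∀ {X Y : C} (f : X ⟶ Y), ∃ (I : C) (e : X ⟶ I) (m : I ⟶ Y),
    IsSO e ∧ IsFFMono m ∧ e ≫ m = f
  so_pullback_stable : ∀ {X Y Z P : C} (f : X ⟶ Z) (g : Y ⟶ Z) (p : P ⟶ X) (q : P ⟶ Y),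
    Is2Pullback f g P p q → IsSO g → IsSO p
  so_bicoinserter : ∀ {A B P : C} (e : A ⟶ B), IsSO e →
    ∀ (π₁ π₂ : P ⟶ A), IsCommaSq e e P π₁ π₂ → IsBicoinserter π₁ π₂ e

/-- An `Ord`-Mal'tsev category: every ideal is `Ord`-difunctional. -/
def IsOrdMaltsev (C : Type u) [Category.{v} C] [OrdEnrichment C] : Prop :=
  ∀ (X Y : C) (D : RelStr X Y), IsIdealRel D → OrdDifunctional D

/-- An `Ord`-W-Mal'tsev object: every ideal is `Ord`-difunctional with respect to
generalised elements with domain `Y`. -/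
def IsOrdWMaltsevObj {C : Type u} [Category.{v} C] [OrdEnrichment C] (Y : C) : Prop :=
  ∀ (X Z : C) (R : RelStr X Z), IsIdealRel R →
    ∀ (x u u' : Y ⟶ X) (z z' v : Y ⟶ Z),
      R.Mem x z → z ≼ z' → R.Mem u z' → u ≼ u' → R.Mem u' v → R.Mem x v

/-!
A pair `(x, z)` of generalised elements with domain `A` that lies in `S ∘ R` has a witness only
locally: for some so-morphism `c : B ⟶ A` there is `y : B ⟶ Y` with
`(c ≫ x, y) ∈ R` and `(y, c ≫ z) ∈ S`. Membership in any relation descends along so-morphisms, these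
being orthogonal to ff-monomorphisms, so both modular laws may be checked at the witness `y`. There
`R ∧ (S^* ∘ T)` and `S ∧ (T ∘ R^*)` contain the required pairs because `S° ⊆ S^*` and `R° ⊆ R^*`.
-/

section

variable {C : Type u} [Category.{v} C] [OrdEnrichment C] {A B X Y Z : C}

theorem Is2Product.hom_ext {P : C} {p : P ⟶ X} {q : P ⟶ Y} (hP : Is2Product X Y P p q)
    {h h' : A ⟶ P} (hp : h ≫ p = h' ≫ p) (hq : h ≫ q = h' ≫ q) : h = h' :=
  (hP.lift (h' ≫ p) (h' ≫ q)).unique ⟨hp, hq⟩ ⟨rfl, rfl⟩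

namespace RelStr

variable {R S : RelStr X Y} {x : A ⟶ X} {y : A ⟶ Y}

theorem Mem.precomp (h : R.Mem x y) (c : B ⟶ A) : R.Mem (c ≫ x) (c ≫ y) := by
  obtain ⟨r, rfl, rfl⟩ := h
  exact ⟨c ≫ r, Category.assoc .., Category.assoc ..⟩

theorem Sub.mem (hRS : R.Sub S) (h : R.Mem x y) : S.Mem x y := by
  obtain ⟨r, rfl, rfl⟩ := h
  exact Mem.precomp hRS r

theorem Mem.op (h : R.Mem x y) : R.op.Mem y x :=
  let ⟨r, hp, hq⟩ := h
  ⟨r, hq, hp⟩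

theorem isFFMono_of_comp_eq {P : C} {p : P ⟶ X} {q : P ⟶ Y} {m : R.obj ⟶ P}
    (hp : m ≫ p = R.p) (hq : m ≫ q = R.q) : IsFFMono m := by
  refine ⟨fun a a' h => R.jointly_ff a a' ?_ ?_, ⟨fun a a' h => R.jointly_mono a a' ?_ ?_⟩⟩
  · simpa only [homLe, Category.assoc, hp] using OrdEnrichment.postcomp_ord p h
  · simpa only [homLe, Category.assoc, hq] using OrdEnrichment.postcomp_ord q h
  · simpa only [Category.assoc, hp] using congrArg (· ≫ p) h
  · simpa only [Category.assoc, hq] using congrArg (· ≫ q) h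

theorem Mem.of_so {P : C} {p : P ⟶ X} {q : P ⟶ Y} (hP : Is2Product X Y P p q)
    {e : B ⟶ A} (he : IsSO e) (h : R.Mem (e ≫ x) (e ≫ y)) : R.Mem x y := by
  obtain ⟨r, hrp, hrq⟩ := h
  obtain ⟨m, hmp, hmq⟩ := (hP.lift R.p R.q).exists
  obtain ⟨w, rfl, rfl⟩ := (hP.lift x y).exists
  have square : r ≫ m = e ≫ w := hP.hom_ext (by simp only [Category.assoc, hmp, hrp])
    (by simp only [Category.assoc, hmq, hrq])
  obtain ⟨d, -, rfl⟩ := he m (isFFMono_of_comp_eq hmp hmq) r w square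
  exact ⟨d, by rw [Category.assoc, hmp], by rw [Category.assoc, hmq]⟩

end RelStr

variable (C) in
/-- Stability of so-morphisms under base change: every so-morphism has a 2-pullback along every
morphism, and the pulled back morphism is again an so-morphism. -/
def HasStableSO : Prop :=
  ∀ {X Y Z : C} (f : X ⟶ Z) (g : Y ⟶ Z), IsSO g →
    ∃ (P : C) (p : P ⟶ X) (q : P ⟶ Y), Is2Pullback f g P p q ∧ IsSO p

theorem IsRegularOrd.hasStableSO (hC : IsRegularOrd C) : HasStableSO C := fun f g hg =>
  let ⟨P, p, q, hP⟩ := hC.has2Pullbacks f g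
  ⟨P, p, q, hP, hC.so_pullback_stable f g p q hP hg⟩

namespace IsCompositeRel

variable {R : RelStr X Y} {S : RelStr Y Z} {T : RelStr X Z} {x : A ⟶ X} {z : A ⟶ Z}

theorem mem (h : IsCompositeRel R S T) {y : A ⟶ Y} (hR : R.Mem x y) (hS : S.Mem y z) :
    T.Mem x z := by
  obtain ⟨P, p₁, p₂, e, hP, -, he_p, he_q⟩ := h
  obtain ⟨r, rfl, rfl⟩ := hR
  obtain ⟨s, hsr, rfl⟩ := hS
  obtain ⟨k, rfl, rfl⟩ := (hP.lift r s hsr.symm).exists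
  exact ⟨k ≫ e, by simp only [Category.assoc, he_p], by simp only [Category.assoc, he_q]⟩

theorem exists_so_of_mem (h : IsCompositeRel R S T) (hso : HasStableSO C) (hT : T.Mem x z) :
    ∃ (B : C) (c : B ⟶ A) (y : B ⟶ Y), IsSO c ∧ R.Mem (c ≫ x) y ∧ S.Mem y (c ≫ z) := by
  obtain ⟨P, p₁, p₂, e, hP, he, he_p, he_q⟩ := h
  obtain ⟨t, rfl, rfl⟩ := hT
  obtain ⟨B, c, d, hB, hc⟩ := hso t e he
  have hx : c ≫ t ≫ T.p = d ≫ p₁ ≫ R.p := by rw [← Category.assoc, hB.comm, Category.assoc, he_p]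
  have hz : c ≫ t ≫ T.q = d ≫ p₂ ≫ S.q := by rw [← Category.assoc, hB.comm, Category.assoc, he_q]
  refine ⟨B, c, d ≫ p₁ ≫ R.q, hc, ⟨d ≫ p₁, ?_, ?_⟩, ⟨d ≫ p₂, ?_, ?_⟩⟩
  · rw [hx, Category.assoc]
  · rw [Category.assoc]
  · rw [hP.comm, Category.assoc]
  · rw [hz, Category.assoc]

end IsCompositeRel

theorem IsStarRel.sharpRel_sub {f : X ⟶ Y} {F : RelStr X Y} (hF : IsStarRel f F) :
    (sharpRel f).Sub F :=
  (hF.lift (𝟙 X) f (by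
    rw [Category.id_comp, Category.comp_id]; exact OrdEnrichment.ord_refl f)).exists

theorem IsCostarRel.cosharpRel_sub {f : X ⟶ Y} {F : RelStr Y X} (hF : IsCostarRel f F) :
    (cosharpRel f).Sub F :=
  (hF.lift f (𝟙 X) (by
    rw [Category.id_comp, Category.comp_id]; exact OrdEnrichment.ord_refl f)).exists

-- `S° = (s₁)_♯ ∘ (s₂)° ⊆ (s₁)_* ∘ (s₂)^*`
theorem IsCompositeRel.op_sub_of_costar_star {S : RelStr Y Z} {S₁ : RelStr S.obj Y}
    {S₂ : RelStr Z S.obj} {S' : RelStr Z Y} (h : IsCompositeRel S₂ S₁ S')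
    (hS₂ : IsCostarRel S.q S₂) (hS₁ : IsStarRel S.p S₁) : S.op.Sub S' :=
  h.mem hS₂.cosharpRel_sub hS₁.sharpRel_sub

theorem statement8_general (hso : HasStableSO C)
    {P : C} {π₁ : P ⟶ X} {π₂ : P ⟶ Z} (hP : Is2Product X Z P π₁ π₂)
    {R : RelStr X Y} {S : RelStr Y Z} {T SR M : RelStr X Z}
    (hSR : IsCompositeRel R S SR) (hM : IsMeetRel SR T M)
    {S' : RelStr Z Y} (hS' : S.op.Sub S') {S'T : RelStr X Y} (hS'T : IsCompositeRel T S' S'T)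
    {N₁ : RelStr X Y} (hN₁ : IsMeetRel R S'T N₁)
    {W₁ : RelStr X Z} (hW₁ : IsCompositeRel N₁ S W₁)
    {R' : RelStr Y X} (hR' : R.op.Sub R') {TR' : RelStr Y Z} (hTR' : IsCompositeRel R' T TR')
    {N₂ : RelStr Y Z} (hN₂ : IsMeetRel S TR' N₂)
    {W₂ : RelStr X Z} (hW₂ : IsCompositeRel R N₂ W₂) :
    M.Sub W₁ ∧ M.Sub W₂ := by
  -- An inclusion `M ⊆ W` says that the generic element `(M.p, M.q)` of `M` lies in `W`.
  obtain ⟨B, c, y, hc, hRxy, hSyz⟩ := hSR.exists_so_of_mem hso hM.1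
  have hTxz : T.Mem (c ≫ M.p) (c ≫ M.q) := RelStr.Mem.precomp hM.2.1 c
  constructor
  · have hS'zy : S'.Mem (c ≫ M.q) y := hS'.mem hSyz.op
    have hN₁xy : N₁.Mem (c ≫ M.p) y := hN₁.2.2 _ _ hRxy (hS'T.mem hTxz hS'zy)
    exact RelStr.Mem.of_so hP hc (hW₁.mem hN₁xy hSyz)
  · have hR'yx : R'.Mem y (c ≫ M.p) := hR'.mem hRxy.op
    have hN₂yz : N₂.Mem y (c ≫ M.q) := hN₂.2.2 _ _ hSyz (hTR'.mem hR'yx hTxz)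
    exact RelStr.Mem.of_so hP hc (hW₂.mem hRxy hN₂yz)

end

/-- The enriched modular laws for ideals. -/
theorem statement8 {C : Type u} [Category.{v} C] [OrdEnrichment C] (hC : IsRegularOrd C)
    {X Y Z : C} (R : RelStr X Y) (hR : IsIdealRel R)
    (S : RelStr Y Z) (hS : IsIdealRel S)
    (T : RelStr X Z) (hT : IsIdealRel T)
    (SR : RelStr X Z) (hSR : IsCompositeRel R S SR)
    (M1 : RelStr X Z) (hM1 : IsMeetRel SR T M1)
    -- `S^* = (s₁)_* ∘ (s₂)^*`
    (S1star : RelStr S.obj Y) (hS1star : IsStarRel S.p S1star)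
    (S2co : RelStr Z S.obj) (hS2co : IsCostarRel S.q S2co)
    (Supper : RelStr Z Y) (hSupper : IsCompositeRel S2co S1star Supper)
    -- `S^* ∘ T`
    (ST : RelStr X Y) (hST : IsCompositeRel T Supper ST)
    (M2 : RelStr X Y) (hM2 : IsMeetRel R ST M2)
    (W1 : RelStr X Z) (hW1 : IsCompositeRel M2 S W1)
    -- `R^* = (r₁)_* ∘ (r₂)^*`
    (R1star : RelStr R.obj X) (hR1star : IsStarRel R.p R1star)
    (R2co : RelStr Y R.obj) (hR2co : IsCostarRel R.q R2co)
    (Rupper : RelStr Y X) (hRupper : IsCompositeRel R2co R1star Rupper)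
    -- `T ∘ R^*`
    (TR : RelStr Y Z) (hTR : IsCompositeRel Rupper T TR)
    (M3 : RelStr Y Z) (hM3 : IsMeetRel S TR M3)
    (W2 : RelStr X Z) (hW2 : IsCompositeRel R M3 W2) :
    M1.Sub W1 ∧ M1.Sub W2 := by
  obtain ⟨P, π₁, π₂, hP⟩ := hC.has2Products X Z
  exact statement8_general hC.hasStableSO hP hSR hM1
    (hSupper.op_sub_of_costar_star hS2co hS1star) hST hM2 hW1
    (hRupper.op_sub_of_costar_star hR2co hR1star) hTR hM3 hW2
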